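/- (Theorem 1, property 2: sparsity preservation, quantitative form.) Under the IRLS setup, if some AP m' has zero total transmit power at the previous iterate, i.e., t_{m'}(ρ') = 0, then its total transmit power at the new iterate satisfies Δ_{m'} · t_{m'}(ρ'') ≤ ε^{2 − p̃} · Σ_{m=1}^M Δ_m · t_m(ρ')^{p̃/2}. In particular, as the damping constant ε tends to 0, an AP with zero transmit power at one iteration keeps zero transmit power in the following iterations. -/

import Mathlib

open Finset

/-- Total transmit power `t_m(ρ) = Σ_k ρ_{mk}` of AP `m` (the squared norm `‖ρ_m‖²`
in the paper's square-root parametrization). -/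
noncomputable def totPow {M K : ℕ} (ρ : Fin M → Fin K → ℝ) (m : Fin M) : ℝ :=
  ∑ k : Fin K, ρ m k

/-!
The weighted objective is compared at the two iterates, from both sides. All its terms are
nonnegative, so at the new iterate it dominates its `i`-th term alone, where the weight is
`(Δ i * p / 2) * (t i + δ) ^ (p / 2 - 1)`. At the old iterate, since
`p / 2 - 1 ≤ 0`, damping decreases every term, so the objective is at most its undamped value
`p / 2 * ∑ j, Δ j * t j ^ (p / 2)`. Dividing by the weight gives a bound for every `i`; when
`t i = 0` and `δ = ε ^ 2` the factor `(t i + δ) ^ (1 - p / 2)` is `ε ^ (2 - p)`.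
-/

section Irls

variable {ι : Type*} {Δ t s : ι → ℝ} {p δ : ℝ}

/-- The IRLS weight at the iterate with powers `t`, i.e. the derivative of `Δ i * x ^ (p / 2)` at
`x = t i + δ`. The damping `δ` stands for the paper's `ε ^ 2`. -/
noncomputable def irlsWeight (Δ : ι → ℝ) (p δ : ℝ) (t : ι → ℝ) (i : ι) : ℝ :=
  (Δ i * p / 2) * (t i + δ) ^ (p / 2 - 1)

/-- The weighted objective which an IRLS step from powers `t` minimizes over the new powers `s`. -/
noncomputable def irlsObjective [Fintype ι] (Δ : ι → ℝ) (p δ : ℝ) (t s : ι → ℝ) : ℝ :=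
  ∑ i, irlsWeight Δ p δ t i * s i

theorem add_rpow_sub_one_mul_le_rpow {x y q : ℝ} (hx : 0 ≤ x) (hy : 0 ≤ y) (hq : q ≤ 1) :
    (x + y) ^ (q - 1) * x ≤ x ^ q := by
  rcases hx.eq_or_lt with rfl | hx
  · simpa only [mul_zero] using Real.rpow_nonneg le_rfl q
  · calc (x + y) ^ (q - 1) * x
        ≤ x ^ (q - 1) * x := by
          gcongr ?_ * x
          exact Real.rpow_le_rpow_of_nonpos hx (le_add_of_nonneg_right hy) (sub_nonpos.2 hq)
      _ = x ^ q := by rw [← Real.rpow_add_one hx.ne', sub_add_cancel]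

theorem sq_rpow_one_sub_half {x : ℝ} (hx : 0 ≤ x) (p : ℝ) :
    (x ^ 2) ^ (1 - p / 2) = x ^ (2 - p) := by
  rw [← Real.rpow_natCast_mul hx]
  congr 1
  push_cast
  ring

theorem irlsWeight_nonneg {i : ι} (hΔ : 0 ≤ Δ i) (hp : 0 ≤ p) (hi : 0 ≤ t i + δ) :
    0 ≤ irlsWeight Δ p δ t i :=
  mul_nonneg (by positivity) (Real.rpow_nonneg hi _)

theorem rpow_mul_irlsWeight {i : ι} (hi : 0 < t i + δ) :
    (t i + δ) ^ (1 - p / 2) * irlsWeight Δ p δ t i = p / 2 * Δ i := by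
  have hinv : (t i + δ) ^ (1 - p / 2) * (t i + δ) ^ (p / 2 - 1) = 1 := by
    rw [← Real.rpow_add hi, sub_add_sub_cancel, sub_self, Real.rpow_zero]
  rw [irlsWeight, mul_left_comm, hinv]
  ring

theorem irlsWeight_mul_self_le {i : ι} (hΔ : 0 ≤ Δ i) (hp0 : 0 ≤ p) (hp2 : p ≤ 2)
    (ht : 0 ≤ t i) (hδ : 0 ≤ δ) :
    irlsWeight Δ p δ t i * t i ≤ p / 2 * (Δ i * t i ^ (p / 2)) :=
  calc irlsWeight Δ p δ t i * t i
      = p / 2 * (Δ i * ((t i + δ) ^ (p / 2 - 1) * t i)) := by rw [irlsWeight]; ring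
    _ ≤ p / 2 * (Δ i * t i ^ (p / 2)) := by
      gcongr
      exact add_rpow_sub_one_mul_le_rpow ht hδ (by linarith)

variable [Fintype ι]

theorem irlsWeight_mul_le_irlsObjective (hΔ : ∀ i, 0 ≤ Δ i) (hp : 0 ≤ p)
    (ht : ∀ i, 0 ≤ t i + δ) (hs : ∀ i, 0 ≤ s i) (i : ι) :
    irlsWeight Δ p δ t i * s i ≤ irlsObjective Δ p δ t s :=
  single_le_sum (f := fun j ↦ irlsWeight Δ p δ t j * s j)
    (fun j _ ↦ mul_nonneg (irlsWeight_nonneg (hΔ j) hp (ht j)) (hs j)) (mem_univ i)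

theorem irlsObjective_self_le (hΔ : ∀ i, 0 ≤ Δ i) (hp0 : 0 ≤ p) (hp2 : p ≤ 2)
    (ht : ∀ i, 0 ≤ t i) (hδ : 0 ≤ δ) :
    irlsObjective Δ p δ t t ≤ p / 2 * ∑ i, Δ i * t i ^ (p / 2) := by
  rw [irlsObjective, mul_sum]
  exact sum_le_sum fun i _ ↦ irlsWeight_mul_self_le (hΔ i) hp0 hp2 (ht i) hδ

theorem irls_sparsity_preservation_general (hΔ : ∀ i, 0 ≤ Δ i) (hp0 : 0 < p) (hp2 : p ≤ 2)
    (hδ : 0 < δ) (ht : ∀ i, 0 ≤ t i) (hs : ∀ i, 0 ≤ s i)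
    (hdescent : irlsObjective Δ p δ t s ≤ irlsObjective Δ p δ t t) (i : ι) :
    Δ i * s i ≤ (t i + δ) ^ (1 - p / 2) * ∑ j, Δ j * t j ^ (p / 2) := by
  have hpos (j : ι) : 0 < t j + δ := add_pos_of_nonneg_of_pos (ht j) hδ
  have hterm : irlsWeight Δ p δ t i * s i ≤ p / 2 * ∑ j, Δ j * t j ^ (p / 2) :=
    calc irlsWeight Δ p δ t i * s i
        ≤ irlsObjective Δ p δ t s :=
          irlsWeight_mul_le_irlsObjective hΔ hp0.le (fun j ↦ (hpos j).le) hs i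
      _ ≤ irlsObjective Δ p δ t t := hdescent
      _ ≤ p / 2 * ∑ j, Δ j * t j ^ (p / 2) := irlsObjective_self_le hΔ hp0.le hp2 ht hδ.le
  refine le_of_mul_le_mul_left ?_ (half_pos hp0)
  calc p / 2 * (Δ i * s i)
      = (t i + δ) ^ (1 - p / 2) * (irlsWeight Δ p δ t i * s i) := by
        rw [← mul_assoc, ← mul_assoc, rpow_mul_irlsWeight (hpos i)]
    _ ≤ (t i + δ) ^ (1 - p / 2) * (p / 2 * ∑ j, Δ j * t j ^ (p / 2)) :=
        mul_le_mul_of_nonneg_left hterm (Real.rpow_nonneg (hpos i).le _)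
    _ = p / 2 * ((t i + δ) ^ (1 - p / 2) * ∑ j, Δ j * t j ^ (p / 2)) := mul_left_comm _ _ _

end Irls

theorem totPow_nonneg {M K : ℕ} {ρ : Fin M → Fin K → ℝ} {m : Fin M} (hρ : ∀ k, 0 ≤ ρ m k) :
    0 ≤ totPow ρ m :=
  sum_nonneg fun k _ ↦ hρ k

/-- **Theorem 1, property 2: sparsity preservation, quantitative form.**
If AP `m'` has zero total transmit power at the previous iterate, then after one IRLS
step its total transmit power satisfies
`Δ_{m'} t_{m'}(ρ'') ≤ ε^{2 − p̃} · Σ_m Δ_m t_m(ρ')^{p̃/2}`. -/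
theorem irls_sparsity_preservation (M K : ℕ) (hM : 1 ≤ M) (hK : 1 ≤ K)
    (Δ : Fin M → ℝ) (hΔ : ∀ m, 0 < Δ m) (p ε : ℝ)
    (hp0 : 0 < p) (hp2 : p < 2) (hε : 0 < ε)
    (F : Set (Fin M → Fin K → ℝ)) (hFnn : ∀ ρ ∈ F, ∀ m k, 0 ≤ ρ m k)
    (ρ' ρ'' : Fin M → Fin K → ℝ) (hρ' : ρ' ∈ F) (hρ'' : ρ'' ∈ F)
    (hmin : ∀ ρ ∈ F,
      ∑ m : Fin M, (Δ m * p / 2) * (totPow ρ' m + ε ^ 2) ^ (p / 2 - 1) * totPow ρ'' m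
        ≤ ∑ m : Fin M, (Δ m * p / 2) * (totPow ρ' m + ε ^ 2) ^ (p / 2 - 1) * totPow ρ m)
    (m' : Fin M) (hzero : totPow ρ' m' = 0) :
    Δ m' * totPow ρ'' m'
      ≤ ε ^ (2 - p) * ∑ m : Fin M, Δ m * (totPow ρ' m) ^ (p / 2) := by
  have htot {ρ} (hρ : ρ ∈ F) (m : Fin M) : 0 ≤ totPow ρ m := totPow_nonneg (hFnn ρ hρ m)
  simpa only [hzero, zero_add, sq_rpow_one_sub_half hε.le] using
    irls_sparsity_preservation_general (fun m ↦ (hΔ m).le) hp0 hp2.le (pow_pos hε 2)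
      (htot hρ') (htot hρ'') (hmin ρ' hρ') m'
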